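/- Let R be a brace algebra, ⋆ the Loday–Ronco product on T(R), and ⋆ also the Loday–Ronco product on decorated forests T(R^𝒯) induced by the recursive brace operation M(B_+^x(f_1); f_2) = B_+^x(f_1 ⋆ f_2) on decorated trees. With ι(x_1⋯x_n) = B_+^{x_1}(1)⋯B_+^{x_n}(1) and μ defined by μ(1)=1, μ(t_1⋯t_n)=μ(t_1)⋯μ(t_n), μ(B_+^x(s_1⋯s_q)) = M_{1q}(x; μ(s_1)⋯μ(s_q)), one has X ⋆ Y = μ(ι(X) ⋆ ι(Y)) for all X, Y ∈ T(R). -/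

import Mathlib

/-! Setup: a brace algebra `R`, the Loday–Ronco product on `T(R)` (realized in
the tensor algebra), `R`-decorated planar rooted trees with their recursive
brace operation and the induced Loday–Ronco product on decorated forests, and
the maps `ι : T(R) → T(R^𝒯)` and `μ : T(R^𝒯) → T(R)`. -/

/-- Planar rooted trees with vertices decorated by elements of `R`. -/
inductive PTree (R : Type*) : Type _
  | node : R → List (PTree R) → PTree R

section

variable (K : Type*) [Field K] {R : Type*} [AddCommGroup R] [Module K R]

/-- All splittings of a list into a prefix and a suffix. -/
def splits {α : Type*} (l : List α) : List (List α × List α) :=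
  (List.range (l.length + 1)).map fun i => (l.take i, l.drop i)

/-- All factorizations of a list into `k` (possibly empty) consecutive factors. -/
def splitsN {α : Type*} : ℕ → List α → List (List (List α))
  | 0, l => if l.isEmpty then [[]] else []
  | k + 1, l => (splits l).flatMap fun p => (splitsN k p.2).map fun r => p.1 :: r

variable {K}

/-- The word on the right-hand side of the brace relation, for a factorization
of `zs` into `2n+1` consecutive (possibly empty) blocks braced into `ys`. -/
def braceRHSword (M : R → List R → R) : List (List R) → List R → List R
  | [P], [] => P
  | P :: B :: rest, y :: ys => P ++ M y B :: braceRHSword M rest ys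
  | _, _ => []

/-- The brace relation for operations `{x; y₁,…,y_q} = M(x; y₁⋯y_q)`. -/
def BraceRel (M : R → List R → R) : Prop :=
  ∀ (x : R) (ys zs : List R),
    M (M x ys) zs =
      ((splitsN (2 * ys.length + 1) zs).map fun Zs => M x (braceRHSword M Zs ys)).sum

/-- The extension `M(X;Y)` of the brace operations to pairs of words. -/
def Mext (M : R → List R → R) : List R → List R → R
  | [], [] => 0
  | [], [y] => y
  | [], _ :: _ :: _ => 0
  | [x], ys => M x ys
  | _ :: _ :: _, _ => 0

/-- The list of words (with multiplicities) whose formal sum is the Loday–Ronco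
product `X ⋆ Y` in `T(R)` (with `1 ⋆ 1 = 1`; terms with `k > |X| + |Y|` vanish). -/
def starWords (M : R → List R → R) : List R → List R → List (List R)
  | [], [] => [[]]
  | X, Y =>
    (List.range (X.length + Y.length)).flatMap fun k =>
      (splitsN (k + 1) X).flatMap fun Xs =>
        (splitsN (k + 1) Y).map fun Ys => List.zipWith (Mext M) Xs Ys

variable (K)

/-- A word `x₁⋯xₙ ∈ R^{⊗n} ⊂ T(R)`, realized in the tensor algebra. -/
def wd (l : List R) : TensorAlgebra K R :=
  (l.map fun x => TensorAlgebra.ι K x).prod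

/-- The Loday–Ronco product `⋆` on `T(R)`, evaluated on two words. -/
def starW (M : R → List R → R) (X Y : List R) : TensorAlgebra K R :=
  ((starWords M X Y).map (wd K)).sum

/-- Decorated forests: words of decorated trees. -/
abbrev Forest (R : Type*) := List (PTree R)

/-- The space `R^𝒯` spanned by the decorated trees. -/
abbrev TreeMod (R : Type*) := PTree R →₀ K

/-- The space `T(R^𝒯)` of decorated forests. -/
abbrev ForestMod (R : Type*) := Forest R →₀ K

variable {K}

/-- `B₊ˣ` : grafting of a decorated forest onto a new root decorated by `x`. -/
def Bplus (x : R) (f : Forest R) : PTree R := PTree.node x f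

/-- The element of `T(R^𝒯)` obtained from a word whose letters are linear
combinations of decorated trees, expanding multilinearly. -/
noncomputable def wordOf : List (TreeMod K R) → ForestMod K R
  | [] => Finsupp.single ([] : Forest R) 1
  | a :: rest => a.sum fun t c => c • Finsupp.mapDomain (List.cons t) (wordOf rest)

/-- Extension of the tree brace operation to pairs of forests. -/
noncomputable def MextF (Mh : PTree R → Forest R → TreeMod K R) :
    Forest R → Forest R → TreeMod K R
  | [], [] => 0
  | [], [s] => Finsupp.single s 1
  | [], _ :: _ :: _ => 0
  | [t], ys => Mh t ys
  | _ :: _ :: _, _ => 0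

/-- The Loday–Ronco product on decorated forests built from a brace operation
`Mh` on decorated trees. -/
noncomputable def starRHS (Mh : PTree R → Forest R → TreeMod K R) :
    Forest R → Forest R → ForestMod K R
  | [], [] => Finsupp.single ([] : Forest R) 1
  | X, Y =>
    ((List.range (X.length + Y.length)).flatMap fun k =>
      (splitsN (k + 1) X).flatMap fun Xs =>
        (splitsN (k + 1) Y).map fun Ys =>
          wordOf (List.zipWith (MextF Mh) Xs Ys)).sum

/-- `Mh` and `star` satisfy the defining recursion of the brace operation on
decorated trees, `M(B₊ˣ(f₁); f₂) = B₊ˣ(f₁ ⋆ f₂)`, where `⋆` is the Loday–Ronco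
product on decorated forests built from `Mh`. -/
def IsTreeBrace (Mh : PTree R → Forest R → TreeMod K R)
    (star : Forest R → Forest R → ForestMod K R) : Prop :=
  (∀ (x : R) (f₁ f₂ : Forest R),
      Mh (Bplus x f₁) f₂ = Finsupp.mapDomain (Bplus x) (star f₁ f₂)) ∧
  (∀ X Y : Forest R, star X Y = starRHS Mh X Y)

/-- The map `μ` on decorated trees: `μ(B₊ˣ(s₁⋯s_q)) = M_{1q}(x; μ(s₁)⋯μ(s_q))`. -/
def muT (M : R → List R → R) : PTree R → R
  | PTree.node x ts => M x (ts.attach.map fun s => muT M s.1)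
decreasing_by
  have := List.sizeOf_lt_of_mem s.2
  simp only [PTree.node.sizeOf_spec]
  omega

/-- The map `ι : T(R) → T(R^𝒯)`, `ι(x₁⋯xₙ) = B₊^{x₁}(1)⋯B₊^{xₙ}(1)`, on words. -/
def iotaW (xs : List R) : Forest R := xs.map fun x => PTree.node x []

end

section Helpers

theorem aux_splits_nil {α : Type*} : splits ([] : List α) = [([], [])] := by
  simp [splits]

theorem aux_splits_cons {α : Type*} (a : α) (l : List α) :
    splits (a :: l) = ([], a :: l) :: (splits l).map fun p => (a :: p.1, p.2) := by
  simp only [splits, List.length_cons]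
  rw [List.range_succ_eq_map]
  simp

theorem aux_splits_map {α β : Type*} (f : α → β) (l : List α) :
    splits (l.map f) = (splits l).map fun p => (p.1.map f, p.2.map f) := by
  simp [splits]

theorem aux_splitsN_map {α β : Type*} (f : α → β) (k : ℕ) (l : List α) :
    splitsN k (l.map f) = (splitsN k l).map (List.map (List.map f)) := by
  induction k generalizing l with
  | zero => cases l <;> simp [splitsN]
  | succ k ih =>
    simp only [splitsN, aux_splits_map, List.flatMap_map, List.map_flatMap, ih, List.map_map]
    rfl

theorem aux_splitsN_nil {α : Type*} (k : ℕ) :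
    splitsN k ([] : List α) = [List.replicate k []] := by
  induction k with
  | zero => simp [splitsN]
  | succ k ih => simp [splitsN, aux_splits_nil, ih, List.replicate_succ]

theorem aux_splitsN_length {α : Type*} (k : ℕ) (l : List α) :
    ∀ r ∈ splitsN k l, r.length = k := by
  induction k generalizing l with
  | zero => cases l <;> simp [splitsN]
  | succ k ih =>
    intro r hr
    simp only [splitsN, List.mem_flatMap, List.mem_map] at hr
    obtain ⟨p, _, r', hr', rfl⟩ := hr
    simp [ih _ _ hr']

theorem aux_zipWith_replicate {α β γ : Type*} (f : α → β → γ) (a : α) (l : List β) :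
    List.zipWith f (List.replicate l.length a) l = l.map (f a) := by
  induction l with
  | nil => rfl
  | cons b l ih => simp [List.replicate_succ, ih]

theorem aux_sum_flatMap {α N : Type*} [AddCommMonoid N] (l : List α) (f : α → List N) :
    (l.flatMap f).sum = (l.map fun a => (f a).sum).sum := by
  induction l with
  | nil => rfl
  | cons a l ih => simp [ih]

variable {K : Type*} [Field K] {R : Type*} [AddCommGroup R] [Module K R]

theorem aux_wordOf_zero (l : List (TreeMod K R)) : wordOf (0 :: l) = 0 := by
  simp [wordOf]

theorem aux_wordOf_single (t : PTree R) (l : List (TreeMod K R)) :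
    wordOf (Finsupp.single t 1 :: l) = Finsupp.mapDomain (List.cons t) (wordOf l) := by
  simp [wordOf]

theorem aux_unit_sum (Mh : PTree R → Forest R → TreeMod K R) (k : ℕ) (F : Forest R) :
    ((splitsN k F).map fun Ys => wordOf (Ys.map (MextF Mh []))).sum =
      if k = F.length then Finsupp.single F (1 : K) else 0 := by
  induction k generalizing F with
  | zero => cases F <;> simp [splitsN, wordOf]
  | succ k ih =>
    simp only [splitsN, List.map_flatMap, List.map_map, aux_sum_flatMap, Function.comp_def,
      List.map_cons]
    cases F with
    | nil => simp [aux_splits_nil, MextF, aux_wordOf_zero]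
    | cons a t =>
      have key : ((splitsN k t).map fun Ys =>
          wordOf (MextF Mh [] [a] :: Ys.map (MextF Mh []))).sum =
          if k + 1 = (a :: t).length then Finsupp.single (a :: t) (1 : K) else 0 := by
        have h1 : ((splitsN k t).map fun Ys =>
          wordOf (MextF Mh [] [a] :: Ys.map (MextF Mh []))).sum =
          Finsupp.mapDomain (List.cons a)
            ((splitsN k t).map fun Ys => wordOf (Ys.map (MextF Mh []))).sum := by
          rw [← Finsupp.mapDomain.addMonoidHom_apply, map_list_sum, List.map_map]
          simp [MextF, aux_wordOf_single, Function.comp_def]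
        rw [h1, ih]
        by_cases hk : k = t.length
        · simp [hk, Finsupp.mapDomain_single]
        · simp [hk]
      rw [← key]
      cases t with
      | nil => simp [aux_splits_cons, aux_splits_nil, MextF, aux_wordOf_zero]
      | cons b u =>
        simp [aux_splits_cons, MextF, aux_wordOf_zero, Function.comp_def]

theorem aux_star_unit (Mh : PTree R → Forest R → TreeMod K R) (F : Forest R) :
    starRHS Mh [] F = Finsupp.single F (1 : K) := by
  cases F with
  | nil => rfl
  | cons a t =>
    have h1 : ∀ k, ((splitsN (k+1) ([] : Forest R)).flatMap fun Xs =>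
        (splitsN (k + 1) (a :: t)).map fun Ys =>
          wordOf (List.zipWith (MextF Mh) Xs Ys)).sum =
        if k + 1 = (a :: t).length then Finsupp.single (a :: t) (1 : K) else 0 := by
      intro k
      rw [← aux_unit_sum Mh, aux_splitsN_nil]
      simp only [List.flatMap_cons, List.flatMap_nil, List.append_nil]
      congr 1
      refine List.map_congr_left fun r hr => ?_
      have := aux_splitsN_length _ _ r hr
      rw [← this, aux_zipWith_replicate]
    rw [starRHS]
    · rw [aux_sum_flatMap]
      simp only [h1, List.length_nil, List.length_cons, Nat.zero_add, add_left_inj]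
      rw [List.range_succ, List.map_append, List.sum_append]
      rw [List.sum_eq_zero]
      · simp
      · intro x hx
        simp only [List.mem_map, List.mem_range] at hx
        obtain ⟨k, hk, rfl⟩ := hx
        rw [if_neg (by omega)]
    · simp

variable (K) in
/-- The linear extension of `μ` to forests. -/
noncomputable def auxPhi (M : R → List R → R) : ForestMod K R →ₗ[K] TensorAlgebra K R :=
  Finsupp.linearCombination K fun g => wd K (g.map (muT M))

variable (K) in
/-- The linear extension of `μ` to trees. -/
noncomputable def auxPsi (M : R → List R → R) : TreeMod K R →ₗ[K] TensorAlgebra K R :=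
  Finsupp.linearCombination K fun t => TensorAlgebra.ι K (muT M t)

theorem aux_phi_cons (M : R → List R → R) (t : PTree R) (f : ForestMod K R) :
    auxPhi K M (Finsupp.mapDomain (List.cons t) f) =
      TensorAlgebra.ι K (muT M t) * auxPhi K M f := by
  induction f using Finsupp.induction_linear with
  | zero => simp
  | add f g hf hg => rw [Finsupp.mapDomain_add, map_add, hf, hg, map_add, mul_add]
  | single g c => simp [auxPhi, Finsupp.mapDomain_single, wd]

theorem aux_phi_wordOf (M : R → List R → R) (l : List (TreeMod K R)) :
    auxPhi K M (wordOf l) = (l.map (auxPsi K M)).prod := by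
  induction l with
  | nil => simp [auxPhi, wordOf, wd]
  | cons a l ih =>
    rw [wordOf, List.map_cons, List.prod_cons, ← ih, Finsupp.sum, map_sum, auxPsi,
      Finsupp.linearCombination_apply, Finsupp.sum, Finset.sum_mul]
    refine Finset.sum_congr rfl fun t _ => ?_
    rw [map_smul, aux_phi_cons, smul_mul_assoc]

theorem aux_muT_node (M : R → List R → R) (x : R) (ts : Forest R) :
    muT M (PTree.node x ts) = M x (ts.map (muT M)) := by
  rw [muT, List.attach_map_val (f := muT M)]

theorem aux_map_iota (M : R → List R → R) (hM0 : ∀ x : R, M x [] = x) (xs : List R) :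
    (iotaW xs).map (muT M) = xs := by
  simp [iotaW, Function.comp_def, aux_muT_node, hM0]

theorem aux_psi_Mext (M : R → List R → R) (hM0 : ∀ x : R, M x [] = x)
    (Mh : PTree R → Forest R → TreeMod K R)
    (starT : Forest R → Forest R → ForestMod K R)
    (h : IsTreeBrace Mh starT) (A B : List R) :
    auxPsi K M (MextF Mh (iotaW A) (iotaW B)) = TensorAlgebra.ι K (Mext M A B) := by
  match A, B with
  | [], [] => simp [iotaW, MextF, Mext]
  | [], [y] => simp [iotaW, MextF, Mext, auxPsi, aux_muT_node, hM0]
  | [], _ :: _ :: _ => simp [iotaW, MextF, Mext]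
  | _ :: _ :: _, _ => simp [iotaW, MextF, Mext]
  | [x], ys =>
    have h1 : MextF Mh (iotaW [x]) (iotaW ys) = Mh (Bplus x []) (iotaW ys) := by
      simp [iotaW, MextF, Bplus]
    rw [h1, h.1, h.2, aux_star_unit, Finsupp.mapDomain_single]
    simp [auxPsi, Bplus, aux_muT_node, aux_map_iota M hM0, Mext]

end Helpers

/-- Let `R` be a brace algebra, `⋆` the Loday–Ronco product on
`T(R)`, and `⋆` also the Loday–Ronco product on decorated forests `T(R^𝒯)`
induced by the recursive brace operation `M(B₊ˣ(f₁); f₂) = B₊ˣ(f₁ ⋆ f₂)` on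
decorated trees.  With `ι(x₁⋯xₙ) = B₊^{x₁}(1)⋯B₊^{xₙ}(1)` and `μ` defined by
`μ(1) = 1`, `μ(t₁⋯tₙ) = μ(t₁)⋯μ(tₙ)`, `μ(B₊ˣ(s₁⋯s_q)) = M_{1q}(x; μ(s₁)⋯μ(s_q))`,
one has `X ⋆ Y = μ(ι(X) ⋆ ι(Y))` for all `X, Y ∈ T(R)`. -/
theorem star_eq_mu_star_iota
    (K : Type*) [Field K] {R : Type*} [AddCommGroup R] [Module K R]
    (M : R → List R → R)
    (hM0 : ∀ x : R, M x [] = x)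
    (hadd₁ : ∀ (a b : R) (ys : List R), M (a + b) ys = M a ys + M b ys)
    (hsmul₁ : ∀ (c : K) (a : R) (ys : List R), M (c • a) ys = c • M a ys)
    (hadd₂ : ∀ (x : R) (p s : List R) (a b : R),
      M x (p ++ (a + b) :: s) = M x (p ++ a :: s) + M x (p ++ b :: s))
    (hsmul₂ : ∀ (x : R) (p s : List R) (c : K) (a : R),
      M x (p ++ (c • a) :: s) = c • M x (p ++ a :: s))
    (hbrace : BraceRel M)
    (Mh : PTree R → Forest R → TreeMod K R)
    (starT : Forest R → Forest R → ForestMod K R)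
    (h : IsTreeBrace Mh starT) :
    ∀ X Y : List R,
      starW K M X Y =
        (starT (iotaW X) (iotaW Y)).sum fun g c => c • wd K (g.map (muT M)) := by
  intro X Y
  change _ = auxPhi K M _
  have main : ∀ Xs Ys : List (List R),
      auxPhi K M (wordOf (List.zipWith (MextF Mh) (Xs.map iotaW) (Ys.map iotaW))) =
        wd K (List.zipWith (Mext M) Xs Ys) := by
    intro Xs Ys
    rw [aux_phi_wordOf, wd]
    congr 1
    induction Xs generalizing Ys with
    | nil => simp
    | cons A Xs ih =>
      cases Ys with
      | nil => simp
      | cons B Ys =>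
        simp only [List.map_cons, List.zipWith_cons_cons, aux_psi_Mext M hM0 Mh starT h, ih]
  have hsp : ∀ (k : ℕ) (l : List R), splitsN k (iotaW l) = (splitsN k l).map (List.map iotaW) :=
    fun k l => aux_splitsN_map _ k l
  have hlen : ∀ l : List R, (iotaW l).length = l.length := fun l => by simp [iotaW]
  rw [h.2]
  by_cases hXY : X = [] ∧ Y = []
  · obtain ⟨rfl, rfl⟩ := hXY
    simp [iotaW, starRHS, starW, starWords, auxPhi]
  · have hXY' : iotaW X = [] → iotaW Y = [] → False := by
      simpa [iotaW] using hXY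
    rw [starRHS.eq_2 _ _ _ hXY', starW, starWords.eq_2 _ _ _ (fun a b => hXY ⟨a, b⟩)]
    simp only [hsp, hlen, map_list_sum, List.map_flatMap, List.flatMap_map, List.map_map,
      Function.comp_def, main]
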